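/- Let D ≤ s ≤ ⌊t/2⌋, let L* be a generic element of K_{t,⪰}, and let G_t = H_t ∪ W_t. Then the rank condition rank M_s(L*) = rank M_{s−1}(L*) holds if and only if both dim π_{2s}(G_t^⊥) = dim π_{s−1}(G_t^⊥) and dim π_{2s}(G_t^⊥) = dim π_{2s}((G_t^+)^⊥) hold; and these conditions imply dim π_s(G_t^⊥) = dim π_{s−1}(G_t^⊥) and dim π_s(G_t^⊥) = dim π_s((G_t^+)^⊥). -/

import Mathlib

open MvPolynomial

noncomputable section

/-- The polynomial ring `ℝ[x₁,…,xₙ]`. -/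
abbrev MP (n : ℕ) := MvPolynomial (Fin n) ℝ

/-- The total degree `|α|` of a monomial exponent `α`. -/
def mdeg {n : ℕ} (α : Fin n →₀ ℕ) : ℕ := α.sum fun _ e => e

/-- The subspace `ℝ[x]_t` of polynomials of total degree at most `t`. -/
abbrev RxT (n t : ℕ) : Submodule ℝ (MP n) := restrictTotalDegree (Fin n) ℝ t

/-- The kernel of the moment matrix `M_s(L)`: polynomials `p` of degree at most `s` such that
`L(p·x^β) = 0` for all monomials `x^β` of degree at most `s`. -/
def momKer {n : ℕ} (L : Module.Dual ℝ (MP n)) (s : ℕ) : Set (MP n) :=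
  {p | p.totalDegree ≤ s ∧ ∀ β : Fin n →₀ ℕ, mdeg β ≤ s → L (p * monomial β 1) = 0}

/-- Positive semidefiniteness of the moment matrix `M_t(L)`: `L(p²) ≥ 0` for all `p ∈ ℝ[x]_t`. -/
def momPSD {n : ℕ} (L : Module.Dual ℝ (MP n)) (t : ℕ) : Prop :=
  ∀ p : MP n, p.totalDegree ≤ t → 0 ≤ L (p * p)

/-- The bilinear/moment form of order `s` associated to `L`, as a map `ℝ[x]_s → (ℝ[x]_s)*`;
its matrix in the monomial basis is the moment matrix `M_s(L)`. -/
def momBil {n : ℕ} (L : Module.Dual ℝ (MP n)) (s : ℕ) :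
    RxT n s →ₗ[ℝ] Module.Dual ℝ (RxT n s) :=
  LinearMap.mk₂ ℝ (fun p q => L ((p : MP n) * (q : MP n)))
    (fun p p' q => by simp [add_mul])
    (fun c p q => by simp [smul_mul_assoc])
    (fun p q q' => by simp [mul_add])
    (fun c p q => by simp [mul_smul_comm])

/-- The rank of the moment matrix `M_s(L)`. -/
def momRank {n : ℕ} (L : Module.Dual ℝ (MP n)) (s : ℕ) : ℕ :=
  Module.finrank ℝ (LinearMap.range (momBil L s))

/-- The column of the moment matrix `M_s(L)` indexed by the monomial `β`. -/
def momCol {n : ℕ} (L : Module.Dual ℝ (MP n)) (s : ℕ) (β : Fin n →₀ ℕ) :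
    {α : Fin n →₀ ℕ // mdeg α ≤ s} → ℝ :=
  fun α => L (monomial (α.1 + β) 1)

/-- `G^⊥`: linear functionals vanishing on the set `G`. -/
def annih {n : ℕ} (G : Set (MP n)) : Submodule ℝ (Module.Dual ℝ (MP n)) :=
  (Submodule.span ℝ G).dualAnnihilator

/-- The projection `π_s` sending a linear functional to its restriction to `ℝ[x]_s`. -/
def projDual (n s : ℕ) : Module.Dual ℝ (MP n) →ₗ[ℝ] Module.Dual ℝ (RxT n s) :=
  (RxT n s).subtype.dualMap

/-- `dim π_s(G^⊥)`. -/
def dimProj {n : ℕ} (s : ℕ) (G : Set (MP n)) : ℕ :=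
  Module.finrank ℝ (Submodule.map (projDual n s) (annih G))

/-- The one-degree prolongation `S⁺ = S ∪ x₁S ∪ … ∪ xₙS` of a set of polynomials. -/
def plusOp {n : ℕ} (G : Set (MP n)) : Set (MP n) :=
  G ∪ ⋃ i : Fin n, (fun p => X i * p) '' G

/-- The set `H_t = {x^α h_j : |α| + deg h_j ≤ t}` of prolongations of the generators. -/
def Hset {n m : ℕ} (h : Fin m → MP n) (t : ℕ) : Set (MP n) :=
  {p | ∃ (α : Fin n →₀ ℕ) (j : Fin m), mdeg α + (h j).totalDegree ≤ t ∧ p = monomial α 1 * h j}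

/-- The cone `K_{t,⪰}` of linear functionals vanishing on `H_t` with `M_{⌊t/2⌋}(L) ⪰ 0`. -/
def Kpos {n m : ℕ} (h : Fin m → MP n) (t : ℕ) : Set (Module.Dual ℝ (MP n)) :=
  {L | (∀ g ∈ Hset h t, L g = 0) ∧ momPSD L (t / 2)}

/-- `L*` is generic in `K_{t,⪰}`: it belongs to `K_{t,⪰}` and its moment matrix
`M_{⌊t/2⌋}(L*)` has maximum rank over `K_{t,⪰}`. -/
def Generic {n m : ℕ} (h : Fin m → MP n) (t : ℕ) (Ls : Module.Dual ℝ (MP n)) : Prop :=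
  Ls ∈ Kpos h t ∧ ∀ L ∈ Kpos h t, momRank L (t / 2) ≤ momRank Ls (t / 2)

/-- `W_t = {x^α g : |α| ≤ ⌊t/2⌋, g ∈ N_t}`, with `N_t = Ker M_{⌊t/2⌋}(L*)` for `L*` generic. -/
def Wset {n m : ℕ} (h : Fin m → MP n) (t : ℕ) (Ls : Module.Dual ℝ (MP n)) : Set (MP n) :=
  {p | ∃ (α : Fin n →₀ ℕ) (g : MP n), mdeg α ≤ t / 2 ∧ g ∈ momKer Ls (t / 2) ∧
    p = monomial α 1 * g}

/-- The real radical `√[ℝ]I` of an ideal `I`. -/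
def realRad {n : ℕ} (I : Ideal (MP n)) : Set (MP n) :=
  {p | ∃ m : ℕ, 0 < m ∧ ∃ (k : ℕ) (q : Fin k → MP n), p ^ (2 * m) + ∑ j, q j ^ 2 ∈ I}

/-- A set of monomials closed under taking divisions. -/
def DivClosed {n : ℕ} (B : Set (Fin n →₀ ℕ)) : Prop :=
  ∀ a ∈ B, ∀ a' : Fin n →₀ ℕ, a' ≤ a → a' ∈ B

/-- A set of monomials connected to 1: each `m ∈ B` is a product `m = m₁⋯m_k` with `m₁ = 1`
and all partial products `m₁⋯m_h ∈ B` (written additively on exponents). -/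
def ConnectedToOne {n : ℕ} (B : Set (Fin n →₀ ℕ)) : Prop :=
  ∀ a ∈ B, ∃ (k : ℕ) (c : Fin (k + 1) → (Fin n →₀ ℕ)),
    c 0 = 0 ∧ (∀ j : Fin (k + 1), (∑ i ∈ Finset.univ.filter (· ≤ j), c i) ∈ B) ∧
    (∑ i, c i) = a

/-- `Span_ℝ(B)` for a set `B` of monomials. -/
def spanMon {n : ℕ} (B : Set (Fin n →₀ ℕ)) : Submodule ℝ (MP n) :=
  Submodule.span ℝ ((fun a => (monomial a 1 : MP n)) '' B)

/-- The border `∂B = B⁺ \ B` of a set of monomials. -/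
def borderSet {n : ℕ} (B : Set (Fin n →₀ ℕ)) : Set (Fin n →₀ ℕ) :=
  {a | a ∉ B ∧ ∃ i : Fin n, ∃ b ∈ B, a = b + Finsupp.single i 1}

end

/-!
Write `K_s` for the kernel of `M_s(L*)`. All the conditions are membership conditions on
polynomials. For positive semidefinite `M_s(L*)` the rank condition says that `M_s(L*)` is flat,
`ℝ[x]_s ⊆ K_s + ℝ[x]_{s-1}`, while `dim π_s(G^⊥)` is the dimension of the image of `ℝ[x]_s` modulo
`Span G`.

If `M_s(L*)` is flat, the theorem of Curto and Fialkow extends `L*` from `ℝ[x]_{2s}` to a functional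
`L'` on `ℝ[x]` whose moment matrices are all positive semidefinite and whose kernel ideal contains
`K_s`, hence the generators `h_j`. So `L' ∈ K_{t,⪰}`, and genericity of `L*` puts `G_t`, and with it
`G_t⁺`, into that ideal. Hence `dim π_{s-1}((G_t⁺)^⊥) ≥ rank M_{s-1}(L*) ≥ dim π_{2s}(G_t^⊥)`,
where the second inequality rewrites degrees down to `s - 1` modulo `K_s · ℝ[x]_s ⊆ Span G_t`. As
`dim π_d(G^⊥)` grows with `d` and shrinks as `G` grows, all the dimensions in between agree.

Conversely, decompose `p ∈ ℝ[x]_s` as `g + q` with `g ∈ Span G_t` and `q ∈ ℝ[x]_{s-1}`. Since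
`Span G_t⁺ ∩ ℝ[x]_{2s} ⊆ Span G_t`, all products of `g` with polynomials of degree at most `s` stay
in `Span G_t`, on which `L*` vanishes, so `g ∈ K_s`.
-/

section LinearAlgebra

variable {K V : Type*} [Field K] [AddCommGroup V] [Module K V] (S : Submodule K V)

lemma finrank_map_mkQ_add_finrank_inf (A : Submodule K V) [FiniteDimensional K A] :
    Module.finrank K (A.map S.mkQ) + Module.finrank K ↥(S ⊓ A) = Module.finrank K A := by
  have hker : (LinearMap.ker (S.mkQ.domRestrict A)).map A.subtype = S ⊓ A := by
    rw [LinearMap.ker_domRestrict, Submodule.ker_mkQ, Submodule.map_comap_subtype, inf_comm]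
  rw [← LinearMap.range_domRestrict, ← hker, Submodule.finrank_map_subtype_eq]
  exact LinearMap.finrank_range_add_finrank_ker _

lemma finrank_map_mkQ_eq_iff {A B : Submodule K V} (hAB : A ≤ B) [FiniteDimensional K B] :
    Module.finrank K (B.map S.mkQ) = Module.finrank K (A.map S.mkQ) ↔ B ≤ S ⊔ A := by
  have hmap : A.map S.mkQ ≤ B.map S.mkQ := Submodule.map_mono hAB
  rw [← Submodule.comap_map_mkQ, ← Submodule.map_le_iff_le_comap]
  exact ⟨fun h => (Submodule.eq_of_le_of_finrank_eq hmap h.symm).ge,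
    fun h => by rw [le_antisymm h hmap]⟩

/-- The dual of `V ⧸ S` is the annihilator of `S`, so restricting that annihilator to `A` dualizes
`A → V ⧸ S`. -/
lemma finrank_map_dualMap_dualAnnihilator (A : Submodule K V) :
    Module.finrank K (S.dualAnnihilator.map A.subtype.dualMap) =
      Module.finrank K (A.map S.mkQ) := by
  rw [← S.range_dualMap_mkQ_eq, ← LinearMap.range_comp, LinearMap.dualMap_comp_dualMap,
    LinearMap.finrank_range_dualMap_eq_finrank_range, LinearMap.range_comp, Submodule.range_subtype]

lemma exists_linearMap_sub_mem (A : Submodule K V) :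
    ∃ N : V →ₗ[K] A, (∀ p ∈ S ⊔ A, p - N p ∈ S) ∧ ∀ p ∈ S, N p = 0 := by
  set f : A →ₗ[K] V ⧸ S := S.mkQ.domRestrict A
  obtain ⟨r, hr⟩ := f.rangeRestrict.exists_rightInverse_of_surjective f.range_rangeRestrict
  obtain ⟨g, hg⟩ := r.exists_extend
  have hfg : ∀ y ∈ LinearMap.range f, f (g y) = y := fun y hy => by
    rw [show g y = r ⟨y, hy⟩ from LinearMap.congr_fun hg ⟨y, hy⟩]
    exact congrArg Subtype.val (LinearMap.congr_fun hr ⟨y, hy⟩)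
  refine ⟨g ∘ₗ S.mkQ, fun p hp => ?_, fun p hp => ?_⟩
  · have hpf : S.mkQ p ∈ LinearMap.range f := by
      rwa [LinearMap.range_domRestrict, ← Submodule.mem_comap, Submodule.comap_map_mkQ]
    exact (Submodule.Quotient.eq S).1 (hfg _ hpf).symm
  · rw [LinearMap.comp_apply, Submodule.mkQ_apply, (Submodule.Quotient.mk_eq_zero S).2 hp, map_zero]

end LinearAlgebra

section Degree

variable {σ R : Type*} [CommSemiring R]

lemma restrictTotalDegree_mono {a b : ℕ} (hab : a ≤ b) :
    restrictTotalDegree σ R a ≤ restrictTotalDegree σ R b :=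
  restrictSupport_mono R fun _ h => le_trans h hab

lemma one_mem_restrictTotalDegree (a : ℕ) : 1 ∈ restrictTotalDegree σ R a := by
  simp [mem_restrictTotalDegree]

lemma mul_mem_restrictTotalDegree {a b : ℕ} {p q : MvPolynomial σ R}
    (hp : p ∈ restrictTotalDegree σ R a) (hq : q ∈ restrictTotalDegree σ R b) :
    p * q ∈ restrictTotalDegree σ R (a + b) := by
  rw [mem_restrictTotalDegree] at *
  exact (totalDegree_mul p q).trans (add_le_add hp hq)

lemma X_mul_mem_restrictTotalDegree {a : ℕ} {p : MvPolynomial σ R} (i : σ)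
    (hp : p ∈ restrictTotalDegree σ R a) : X i * p ∈ restrictTotalDegree σ R (a + 1) := by
  nontriviality R
  rw [add_comm]
  exact mul_mem_restrictTotalDegree ((mem_restrictTotalDegree _ _ _).2 (totalDegree_X i).le) hp

lemma restrictTotalDegree_le_iff {s : ℕ} {W : Submodule R (MvPolynomial σ R)} :
    restrictTotalDegree σ R s ≤ W ↔ ∀ β : σ →₀ ℕ, β.degree ≤ s → monomial β 1 ∈ W := by
  rw [restrictTotalDegree, restrictSupport_eq_span, Submodule.span_le, Set.image_subset_iff]
  rfl

lemma restrictTotalDegree_add_le_mul (a b : ℕ) :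
    restrictTotalDegree σ R (a + b) ≤ restrictTotalDegree σ R a * restrictTotalDegree σ R b := by
  have hmon {c : ℕ} : ∀ β : σ →₀ ℕ, β.degree ≤ c → monomial β 1 ∈ restrictTotalDegree σ R c :=
    restrictTotalDegree_le_iff.1 le_rfl
  refine restrictTotalDegree_le_iff.2 fun γ hγ => ?_
  obtain ⟨β, hβγ, hβ⟩ := γ.exists_le_degree_eq (min a γ.degree) (min_le_right _ _)
  obtain ⟨δ, rfl⟩ := exists_add_of_le hβγ
  rw [map_add] at hβ hγ
  rw [← one_mul (1 : R), ← monomial_mul]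
  exact Submodule.mul_mem_mul (hmon β (by omega)) (hmon δ (by omega))

lemma restrictTotalDegree_le_of_X_mul_mem {k : ℕ} {W : Submodule R (MvPolynomial σ R)}
    (one_mem : 1 ∈ W)
    (X_mul_mem : ∀ i, ∀ j < k, ∀ p ∈ restrictTotalDegree σ R j, p ∈ W → X i * p ∈ W) :
    restrictTotalDegree σ R k ≤ W := by
  refine restrictTotalDegree_le_iff.2 fun γ hγ => ?_
  induction k generalizing γ with
  | zero => rwa [γ.degree_eq_zero_iff.1 (Nat.le_zero.1 hγ)]
  | succ k ih =>
    replace ih := ih fun i j hj => X_mul_mem i j (hj.trans (Nat.lt_succ_self k))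
    obtain rfl | hγ0 := eq_or_ne γ 0
    · exact ih 0 (Nat.zero_le k)
    · obtain ⟨i, hi⟩ := Finsupp.ne_iff.1 hγ0
      obtain ⟨β, rfl⟩ := exists_add_of_le (Finsupp.single_le_iff.2 (Nat.one_le_iff_ne_zero.2 hi))
      rw [map_add, Finsupp.degree_single] at hγ
      rw [← one_mul (1 : R), ← monomial_mul]
      have hβ : β.degree ≤ k := by omega
      exact X_mul_mem i k (Nat.lt_succ_self k) _ (restrictTotalDegree_le_iff.1 le_rfl β hβ)
        (ih β hβ)

end Degree

section Commuting

variable {σ R : Type*} [CommSemiring R]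

open scoped IsMulCommutative in
lemma exists_algHom_X_eq_of_commute {A : Type*} [Semiring A] [Algebra R A] (T : σ → A)
    (hT : ∀ i j, Commute (T i) (T j)) : ∃ φ : MvPolynomial σ R →ₐ[R] A, ∀ i, φ (X i) = T i := by
  have : IsMulCommutative (Algebra.adjoin R (Set.range T)) :=
    Algebra.isMulCommutative_adjoin R (by rintro _ ⟨i, rfl⟩ _ ⟨j, rfl⟩; exact hT i j)
  refine ⟨(Algebra.adjoin R (Set.range T)).val.comp
    (aeval fun i => ⟨T i, Algebra.subset_adjoin ⟨i, rfl⟩⟩), fun i => ?_⟩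
  rw [AlgHom.comp_apply, aeval_X, Subalgebra.val_apply]

lemma isSelfAdjoint_algHom_of_X {V : Type*} [AddCommMonoid V] [Module R V]
    (B : LinearMap.BilinForm R V) (φ : MvPolynomial σ R →ₐ[R] Module.End R V)
    (hφ : ∀ i, B.IsSelfAdjoint (φ (X i))) (f : MvPolynomial σ R) : B.IsSelfAdjoint (φ f) := by
  induction f using MvPolynomial.induction_on with
  | C a =>
    intro x y
    simp only [← algebraMap_eq, AlgHom.commutes, Module.algebraMap_end_apply, map_smul,
      LinearMap.smul_apply]
  | add p q hp hq => rw [map_add]; exact LinearMap.IsAdjointPair.add hp hq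
  | mul_X p i hp =>
    have h := LinearMap.IsAdjointPair.mul hp (hφ i)
    rwa [← map_mul, ← map_mul, mul_comm (X i) p] at h

end Commuting

section MomentKernel

variable {n : ℕ} {L L' : Module.Dual ℝ (MP n)} {a s : ℕ}

lemma momBil_apply (p q : RxT n s) : momBil L s p q = L (p * q : MP n) := rfl

/-- The kernel of the moment matrix `M_s(L)`, as a subspace of `ℝ[x]`. -/
noncomputable def momKerSubmodule (L : Module.Dual ℝ (MP n)) (s : ℕ) : Submodule ℝ (MP n) :=
  (LinearMap.ker (momBil L s)).map (RxT n s).subtype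

lemma mem_momKerSubmodule {p : MP n} :
    p ∈ momKerSubmodule L s ↔ p ∈ RxT n s ∧ ∀ q ∈ RxT n s, L (p * q) = 0 := by
  rw [momKerSubmodule, Submodule.mem_map]
  constructor
  · rintro ⟨p, hp, rfl⟩
    exact ⟨p.2, fun q hq => LinearMap.congr_fun hp ⟨q, hq⟩⟩
  · rintro ⟨hp, hL⟩
    exact ⟨⟨p, hp⟩, LinearMap.ext fun q => hL q q.2, rfl⟩

lemma momKerSubmodule_le_RxT : momKerSubmodule L s ≤ RxT n s :=
  Submodule.map_subtype_le _ _

lemma coe_momKerSubmodule : (momKerSubmodule L s : Set (MP n)) = momKer L s := by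
  ext p
  rw [SetLike.mem_coe, mem_momKerSubmodule, mem_restrictTotalDegree]
  exact and_congr_right' <|
    restrictTotalDegree_le_iff (W := LinearMap.ker (L ∘ₗ LinearMap.mulLeft ℝ p))

lemma momRank_add_finrank_momKerSubmodule :
    momRank L s + Module.finrank ℝ (momKerSubmodule L s) = Module.finrank ℝ (RxT n s) := by
  rw [momKerSubmodule, Submodule.finrank_map_subtype_eq]
  exact LinearMap.finrank_range_add_finrank_ker _

/-- The kernel of the infinite moment matrix of `L`: the largest ideal on which `L` vanishes. -/
noncomputable def momIdeal (L : Module.Dual ℝ (MP n)) : Ideal (MP n) where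
  carrier := {u | ∀ f, L (f * u) = 0}
  zero_mem' f := by rw [mul_zero, map_zero]
  add_mem' hu hv f := by rw [mul_add, map_add, hu f, hv f, add_zero]
  smul_mem' c u hu f := by rw [smul_eq_mul, ← mul_assoc, hu]

lemma apply_eq_zero_of_mem_momIdeal {u : MP n} (hu : u ∈ momIdeal L) : L u = 0 := by
  simpa only [one_mul] using hu 1

lemma momPSD.mono (hL : momPSD L s) (has : a ≤ s) : momPSD L a :=
  fun p hp => hL p (hp.trans has)

lemma momPSD.mem_momKerSubmodule_iff (hL : momPSD L s) {p : MP n} (hp : p ∈ RxT n s) :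
    p ∈ momKerSubmodule L s ↔ L (p * p) = 0 := by
  have hnonneg (q : RxT n s) : 0 ≤ momBil L s q q := hL q ((mem_restrictTotalDegree _ _ _).1 q.2)
  have hsymm : LinearMap.IsSymm (momBil L s) :=
    ⟨fun q r => congrArg L (mul_comm (q : MP n) r)⟩
  rw [momKerSubmodule, Submodule.mem_map]
  refine ⟨?_, fun h => ⟨⟨p, hp⟩, ?_, rfl⟩⟩
  · rintro ⟨q, hq, rfl⟩
    exact LinearMap.congr_fun hq q
  · exact (LinearMap.BilinForm.apply_apply_same_eq_zero_iff (momBil L s) hnonneg hsymm).1 h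

lemma momPSD.momKerSubmodule_eq_inf (hL : momPSD L s) (has : a ≤ s) :
    momKerSubmodule L a = momKerSubmodule L s ⊓ RxT n a := by
  ext p
  rw [Submodule.mem_inf, and_comm]
  refine ⟨fun h => ⟨momKerSubmodule_le_RxT h, ?_⟩, fun ⟨hp, h⟩ => ?_⟩
  · have hp := momKerSubmodule_le_RxT h
    rw [hL.mem_momKerSubmodule_iff (restrictTotalDegree_mono has hp)]
    exact ((hL.mono has).mem_momKerSubmodule_iff hp).1 h
  · rw [(hL.mono has).mem_momKerSubmodule_iff hp]
    exact (hL.mem_momKerSubmodule_iff (restrictTotalDegree_mono has hp)).1 h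

lemma momPSD.momRank_eq_finrank_map_mkQ (hL : momPSD L s) (has : a ≤ s) :
    momRank L a = Module.finrank ℝ ((RxT n a).map (momKerSubmodule L s).mkQ) := by
  have hrank := momRank_add_finrank_momKerSubmodule (L := L) (s := a)
  rw [hL.momKerSubmodule_eq_inf has] at hrank
  have hquot := finrank_map_mkQ_add_finrank_inf (momKerSubmodule L s) (RxT n a)
  omega

/-- Every polynomial of degree at most `s` is congruent to one of degree at most `s - 1` modulo
`Ker M_s(L)`. For positive semidefinite `M_s(L)` this is the rank condition, in which case `M_s(L)`
is called a flat extension of `M_{s-1}(L)`. At `s = 0` the subtraction truncates and the condition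
is vacuous. -/
def IsFlat (L : Module.Dual ℝ (MP n)) (s : ℕ) : Prop :=
  RxT n s ≤ momKerSubmodule L s ⊔ RxT n (s - 1)

lemma momPSD.momRank_eq_momRank_sub_one_iff (hL : momPSD L s) :
    momRank L s = momRank L (s - 1) ↔ IsFlat L s := by
  rw [hL.momRank_eq_finrank_map_mkQ le_rfl, hL.momRank_eq_finrank_map_mkQ (Nat.sub_le s 1)]
  exact finrank_map_mkQ_eq_iff _ (restrictTotalDegree_mono (Nat.sub_le s 1))

lemma momKerSubmodule_le_momIdeal (hL : ∀ d, momPSD L d) :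
    momKerSubmodule L s ≤ (momIdeal L).restrictScalars ℝ := by
  intro p hp f
  have hps : p ∈ RxT n (max s f.totalDegree) :=
    restrictTotalDegree_mono (le_max_left _ _) (momKerSubmodule_le_RxT hp)
  have hpp := ((hL s).mem_momKerSubmodule_iff (momKerSubmodule_le_RxT hp)).1 hp
  rw [mul_comm]
  exact (mem_momKerSubmodule.1 (((hL _).mem_momKerSubmodule_iff hps).2 hpp)).2 f <|
    (mem_restrictTotalDegree _ _ _).2 (le_max_right _ _)

lemma momPSD.momKerSubmodule_add_le (hL : momPSD L s) (hL' : momPSD L' s) :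
    momKerSubmodule (L + L') s ≤ momKerSubmodule L s := by
  intro p hp
  obtain ⟨hps, hker⟩ := mem_momKerSubmodule.1 hp
  have hdeg := (mem_restrictTotalDegree _ _ _).1 hps
  have hsum : L (p * p) + L' (p * p) = 0 := hker p hps
  exact (hL.mem_momKerSubmodule_iff hps).2 (by linarith [hL p hdeg, hL' p hdeg])

/-- `L + L'` has the rank of `L` by genericity, so the kernel of its moment matrix, the intersection
of the two kernels, is that of `L`. -/
lemma Generic.momKerSubmodule_le {m t : ℕ} {h : Fin m → MP n} (hL : Generic h t L)
    (hL' : L' ∈ Kpos h t) : momKerSubmodule L (t / 2) ≤ momKerSubmodule L' (t / 2) := by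
  obtain ⟨⟨hvan, hpsd⟩, hmax⟩ := hL
  obtain ⟨hvan', hpsd'⟩ := hL'
  have hsum : L + L' ∈ Kpos h t :=
    ⟨fun g hg => by rw [LinearMap.add_apply, hvan g hg, hvan' g hg, add_zero],
      fun p hp => add_nonneg (hpsd p hp) (hpsd' p hp)⟩
  have hrank := hmax _ hsum
  have hdim := momRank_add_finrank_momKerSubmodule (L := L) (s := t / 2)
  have hdim' := momRank_add_finrank_momKerSubmodule (L := L + L') (s := t / 2)
  have : FiniteDimensional ℝ (momKerSubmodule L (t / 2)) :=
    Submodule.finiteDimensional_of_le momKerSubmodule_le_RxT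
  rw [← Submodule.eq_of_le_of_finrank_le (hpsd.momKerSubmodule_add_le hpsd') (by omega), add_comm]
  exact hpsd'.momKerSubmodule_add_le hpsd

end MomentKernel

section Projection

variable {n a b s : ℕ} {L : Module.Dual ℝ (MP n)} {G G' : Set (MP n)}

lemma dimProj_eq_finrank_map_mkQ :
    dimProj s G = Module.finrank ℝ ((RxT n s).map (Submodule.span ℝ G).mkQ) :=
  finrank_map_dualMap_dualAnnihilator _ _

lemma dimProj_add_finrank_inf :
    dimProj s G + Module.finrank ℝ ↥(Submodule.span ℝ G ⊓ RxT n s) =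
      Module.finrank ℝ (RxT n s) := by
  rw [dimProj_eq_finrank_map_mkQ, finrank_map_mkQ_add_finrank_inf]

lemma dimProj_mono_degree (hab : a ≤ b) : dimProj a G ≤ dimProj b G := by
  rw [dimProj_eq_finrank_map_mkQ, dimProj_eq_finrank_map_mkQ]
  exact Submodule.finrank_mono (Submodule.map_mono (restrictTotalDegree_mono hab))

lemma dimProj_anti_set (hG : G ⊆ G') : dimProj s G' ≤ dimProj s G := by
  have hdim := dimProj_add_finrank_inf (s := s) (G := G)
  have hdim' := dimProj_add_finrank_inf (s := s) (G := G')
  have hle := Submodule.finrank_mono (inf_le_inf_right (RxT n s) (Submodule.span_mono (R := ℝ) hG))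
  omega

lemma dimProj_eq_and_eq_of_le {d : ℕ} (hG : G ⊆ G') (had : a ≤ d) (hdb : d ≤ b)
    (hle : dimProj b G ≤ dimProj a G') :
    dimProj d G = dimProj b G ∧ dimProj d G' = dimProj b G := by
  have had' : dimProj a G' ≤ dimProj d G' := dimProj_mono_degree had
  have hdb' : dimProj d G ≤ dimProj b G := dimProj_mono_degree hdb
  have hd : dimProj d G' ≤ dimProj d G := dimProj_anti_set hG
  omega

lemma dimProj_eq_iff_of_le (hab : a ≤ b) :
    dimProj b G = dimProj a G ↔ RxT n b ≤ Submodule.span ℝ G ⊔ RxT n a := by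
  rw [dimProj_eq_finrank_map_mkQ, dimProj_eq_finrank_map_mkQ]
  exact finrank_map_mkQ_eq_iff _ (restrictTotalDegree_mono hab)

lemma span_inf_RxT_le_of_dimProj_eq (hG : G ⊆ G') (hdim : dimProj s G = dimProj s G') :
    Submodule.span ℝ G' ⊓ RxT n s ≤ Submodule.span ℝ G := by
  have hs := dimProj_add_finrank_inf (s := s) (G := G)
  have hs' := dimProj_add_finrank_inf (s := s) (G := G')
  rw [← Submodule.eq_of_le_of_finrank_eq (inf_le_inf_right (RxT n s) (Submodule.span_mono hG))
    (by omega)]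
  exact inf_le_left

lemma dimProj_le_momRank (hG : momKerSubmodule L s ≤ Submodule.span ℝ G) :
    dimProj s G ≤ momRank L s := by
  have hdim := dimProj_add_finrank_inf (s := s) (G := G)
  have hrank := momRank_add_finrank_momKerSubmodule (L := L) (s := s)
  have hle := Submodule.finrank_mono (le_inf hG momKerSubmodule_le_RxT)
  omega

lemma momRank_le_dimProj (hG : Submodule.span ℝ G ⊓ RxT n s ≤ momKerSubmodule L s) :
    momRank L s ≤ dimProj s G := by
  have hdim := dimProj_add_finrank_inf (s := s) (G := G)
  have hrank := momRank_add_finrank_momKerSubmodule (L := L) (s := s)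
  have : FiniteDimensional ℝ (momKerSubmodule L s) :=
    Submodule.finiteDimensional_of_le momKerSubmodule_le_RxT
  have hle := Submodule.finrank_mono hG
  omega

end Projection

section FlatExtension

variable {n k s : ℕ} {L : Module.Dual ℝ (MP n)}

/-- `N` reduces `ℝ[x]_{k+1}` to `ℝ[x]_k` modulo `Ker M_{k+1}(L)`. -/
structure IsNormalForm (L : Module.Dual ℝ (MP n)) (k : ℕ) (N : MP n →ₗ[ℝ] RxT n k) : Prop where
  sub_apply_mem : ∀ p ∈ RxT n (k + 1), p - N p ∈ momKerSubmodule L (k + 1)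
  apply_eq_zero : ∀ p ∈ momKerSubmodule L (k + 1), N p = 0

lemma exists_isNormalForm (hflat : IsFlat L (k + 1)) :
    ∃ N, IsNormalForm L k N := by
  obtain ⟨N, hsub, hzero⟩ := exists_linearMap_sub_mem (momKerSubmodule L (k + 1)) (RxT n k)
  exact ⟨N, fun p hp => hsub p (hflat hp), hzero⟩

namespace IsNormalForm

variable {N : MP n →ₗ[ℝ] RxT n k}

lemma apply_mul (hN : IsNormalForm L k N) {p q : MP n} (hp : p ∈ RxT n (k + 1))
    (hq : q ∈ RxT n (k + 1)) : L (N p * q) = L (p * q) := by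
  have h := (mem_momKerSubmodule.1 (hN.sub_apply_mem p hp)).2 q hq
  rw [sub_mul, map_sub, sub_eq_zero] at h
  exact h.symm

lemma mem_momKerSubmodule_of_forall (hN : IsNormalForm L k N) {p : MP n} (hp : p ∈ RxT n (k + 1))
    (h : ∀ q ∈ RxT n k, L (p * q) = 0) : p ∈ momKerSubmodule L (k + 1) := by
  refine mem_momKerSubmodule.2 ⟨hp, fun q hq => ?_⟩
  rw [mul_comm, ← hN.apply_mul hq hp, mul_comm, h _ (N q).2]

lemma X_mul_mem_momKerSubmodule (hN : IsNormalForm L k N) (i : Fin n) {p : MP n}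
    (hp : p ∈ RxT n k) (hker : p ∈ momKerSubmodule L (k + 1)) :
    X i * p ∈ momKerSubmodule L (k + 1) := by
  refine hN.mem_momKerSubmodule_of_forall (X_mul_mem_restrictTotalDegree i hp) fun q hq => ?_
  rw [mul_comm (X i), mul_assoc]
  exact (mem_momKerSubmodule.1 hker).2 _ (X_mul_mem_restrictTotalDegree i hq)

/-- Multiplication by `x_i` on `ℝ[x]_k`, reduced back to `ℝ[x]_k` by `N`. -/
noncomputable def mulX (N : MP n →ₗ[ℝ] RxT n k) (i : Fin n) : Module.End ℝ (RxT n k) :=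
  N ∘ₗ LinearMap.mulLeft ℝ (X i) ∘ₗ (RxT n k).subtype

lemma mulX_apply (i : Fin n) (p : RxT n k) : mulX N i p = N (X i * (p : MP n)) := rfl

lemma isSelfAdjoint_mulX (hN : IsNormalForm L k N) (i : Fin n) :
    LinearMap.IsSelfAdjoint (momBil L k) (mulX N i) := by
  intro p q
  have hX (r : RxT n k) := X_mul_mem_restrictTotalDegree i r.2
  have hle (r : RxT n k) := restrictTotalDegree_mono (Nat.le_succ k) r.2
  rw [momBil_apply, momBil_apply, mulX_apply, mulX_apply, hN.apply_mul (hX p) (hle q),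
    mul_comm (p : MP n), hN.apply_mul (hX q) (hle p), mul_right_comm]

/-- `x_i N(x_j p) - x_j N(x_i p)` is orthogonal to `ℝ[x]_k`, hence lies in `Ker M_{k+1}(L)`, which
`N` kills. -/
lemma commute_mulX (hN : IsNormalForm L k N) (i j : Fin n) :
    Commute (mulX N i) (mulX N j) := by
  ext1 p
  have hX (l : Fin n) (r : RxT n k) := X_mul_mem_restrictTotalDegree l r.2
  have hN_mul (l m : Fin n) (q : RxT n k) :
      L (X l * (N (X m * (p : MP n)) : MP n) * (q : MP n)) =
        L (X l * X m * (p : MP n) * (q : MP n)) := by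
    rw [mul_assoc, mul_left_comm, hN.apply_mul (hX m p) (hX l q)]
    congr 1
    ring
  set e : MP n := X i * (N (X j * (p : MP n)) : MP n) - X j * (N (X i * (p : MP n)) : MP n) with he
  have heker : e ∈ momKerSubmodule L (k + 1) :=
    hN.mem_momKerSubmodule_of_forall (sub_mem (hX i _) (hX j _)) fun q hq => by
      rw [he, sub_mul, map_sub, hN_mul i j ⟨q, hq⟩, hN_mul j i ⟨q, hq⟩, mul_comm (X i), sub_self]
  rw [Module.End.mul_apply, Module.End.mul_apply, mulX_apply, mulX_apply, mulX_apply, mulX_apply,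
    ← sub_eq_zero, ← map_sub]
  exact hN.apply_eq_zero e heker

lemma algHom_apply_one (hN : IsNormalForm L k N) (φ : MP n →ₐ[ℝ] Module.End ℝ (RxT n k))
    (hφ : ∀ i, φ (X i) = mulX N i) {f : MP n} (hf : f ∈ RxT n (k + 1)) : φ f (N 1) = N f := by
  suffices hle : RxT n (k + 1) ≤ LinearMap.eqLocus (LinearMap.applyₗ (N 1) ∘ₗ φ.toLinearMap) N from
    hle hf
  refine restrictTotalDegree_le_of_X_mul_mem ?_ fun i j hj p hp hpW => ?_
  · change φ 1 (N 1) = N 1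
    rw [map_one, Module.End.one_apply]
  · change φ p (N 1) = N p at hpW
    change φ (X i * p) (N 1) = N (X i * p)
    have hpk : p ∈ RxT n k := restrictTotalDegree_mono (Nat.lt_succ_iff.1 hj) hp
    have hker := hN.X_mul_mem_momKerSubmodule i (sub_mem hpk (N p).2)
      (hN.sub_apply_mem p (restrictTotalDegree_mono (Nat.le_succ k) hpk))
    have hXp : N (X i * p) = N (X i * (N p : MP n)) := by
      rw [← sub_eq_zero, ← map_sub, ← mul_sub, hN.apply_eq_zero _ hker]
    rw [map_mul, Module.End.mul_apply, hpW, hφ, mulX_apply, hXp]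

/-- The extension is `f ↦ ⟨1, f(M) 1⟩` for the commuting self-adjoint operators `M_i = mulX N i`,
so that `f g ↦ ⟨f(M) 1, g(M) 1⟩`. -/
lemma exists_extension (hN : IsNormalForm L k N) (hL : momPSD L k) :
    ∃ L' : Module.Dual ℝ (MP n), (∀ f ∈ RxT n (2 * (k + 1)), L' f = L f) ∧
      (∀ d, momPSD L' d) ∧ momKerSubmodule L (k + 1) ≤ (momIdeal L').restrictScalars ℝ := by
  obtain ⟨φ, hφ⟩ := exists_algHom_X_eq_of_commute (R := ℝ) _ hN.commute_mulX
  have hadj := isSelfAdjoint_algHom_of_X (momBil L k) φ fun i => by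
    rw [hφ]; exact hN.isSelfAdjoint_mulX i
  have hφN {f : MP n} (hf : f ∈ RxT n (k + 1)) : φ f (N 1) = N f := hN.algHom_apply_one φ hφ hf
  set L' : Module.Dual ℝ (MP n) :=
    momBil L k (N 1) ∘ₗ LinearMap.applyₗ (N 1) ∘ₗ φ.toLinearMap
  have hL'_mul (f g : MP n) : L' (f * g) = L (φ f (N 1) * φ g (N 1)) := by
    change momBil L k (N 1) (φ (f * g) (N 1)) = _
    rw [map_mul, Module.End.mul_apply, ← hadj f]
    rfl
  refine ⟨L', fun f hf => ?_, fun d f _ => ?_, fun u hu f => ?_⟩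
  · have hle : RxT n (k + 1) * RxT n (k + 1) ≤ LinearMap.eqLocus L' L := by
      refine Submodule.mul_le.2 fun p hp q hq => ?_
      have hNq := restrictTotalDegree_mono (Nat.le_succ k) (N q).2
      rw [LinearMap.mem_eqLocus, hL'_mul, hφN hp, hφN hq, hN.apply_mul hp hNq, mul_comm,
        hN.apply_mul hq hp, mul_comm]
    rw [two_mul] at hf
    exact hle (restrictTotalDegree_add_le_mul _ _ hf)
  · rw [hL'_mul]
    exact hL _ ((mem_restrictTotalDegree _ _ _).1 (φ f (N 1)).2)
  · rw [hL'_mul, hφN (momKerSubmodule_le_RxT hu), hN.apply_eq_zero u hu, Submodule.coe_zero,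
      mul_zero, map_zero]

end IsNormalForm

lemma exists_extension_zero (hL : momPSD L 0) :
    ∃ L' : Module.Dual ℝ (MP n), (∀ f ∈ RxT n 0, L' f = L f) ∧
      (∀ d, momPSD L' d) ∧ momKerSubmodule L 0 ≤ (momIdeal L').restrictScalars ℝ := by
  set ev : MP n →ₐ[ℝ] ℝ := aeval 0
  set L' : Module.Dual ℝ (MP n) := L 1 • ev.toLinearMap
  have hL'_apply (f : MP n) : L' f = L 1 * ev f := rfl
  have hagree : RxT n 0 ≤ LinearMap.eqLocus L' L :=
    restrictTotalDegree_le_of_X_mul_mem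
      (by rw [LinearMap.mem_eqLocus, hL'_apply, map_one ev, mul_one]) nofun
  refine ⟨L', hagree, fun d f _ => ?_, fun u hu f => ?_⟩
  · have hone : 0 ≤ L 1 := by simpa only [one_mul] using hL 1 totalDegree_one.le
    rw [hL'_apply, map_mul]
    exact mul_nonneg hone (mul_self_nonneg _)
  · obtain ⟨hu0, hLu⟩ := mem_momKerSubmodule.1 hu
    have hL'u : L' u = 0 := by
      rw [hagree hu0, ← mul_one u, hLu 1 (one_mem_restrictTotalDegree 0)]
    rw [hL'_apply, map_mul, mul_left_comm, ← hL'_apply, hL'u, mul_zero]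

lemma exists_flat_extension (hL : momPSD L s) (hflat : IsFlat L s) :
    ∃ L' : Module.Dual ℝ (MP n), (∀ f ∈ RxT n (2 * s), L' f = L f) ∧
      (∀ d, momPSD L' d) ∧ momKerSubmodule L s ≤ (momIdeal L').restrictScalars ℝ := by
  obtain _ | k := s
  · exact exists_extension_zero hL
  · obtain ⟨N, hN⟩ := exists_isNormalForm hflat
    exact hN.exists_extension (hL.mono (Nat.le_succ k))

end FlatExtension

section DimensionConditions

variable {n m s t : ℕ} {h : Fin m → MP n} {L : Module.Dual ℝ (MP n)} {G : Set (MP n)}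

lemma momPSD.momKerSubmodule_mul_le_span_Wset (hL : momPSD L (t / 2)) (hst : s ≤ t / 2) :
    momKerSubmodule L s * RxT n s ≤ Submodule.span ℝ (Wset h t L) := by
  refine Submodule.mul_le.2 fun p hp => ?_
  rw [hL.momKerSubmodule_eq_inf hst] at hp
  have hker : p ∈ momKer L (t / 2) := by
    rw [← coe_momKerSubmodule]
    exact hp.1
  exact restrictTotalDegree_le_iff
    (W := (Submodule.span ℝ (Wset h t L)).comap (LinearMap.mulLeft ℝ p)) |>.2
    fun β hβ => Submodule.subset_span ⟨β, p, hβ.trans hst, hker, mul_comm _ _⟩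

lemma momPSD.momKerSubmodule_le_span_Wset (hL : momPSD L (t / 2)) (hst : s ≤ t / 2) :
    momKerSubmodule L s ≤ Submodule.span ℝ (Wset h t L) := by
  intro p hp
  rw [← mul_one p]
  exact hL.momKerSubmodule_mul_le_span_Wset hst
    (Submodule.mul_mem_mul hp (one_mem_restrictTotalDegree s))

lemma X_mul_mem_span_plusOp (i : Fin n) {p : MP n} (hp : p ∈ Submodule.span ℝ G) :
    X i * p ∈ Submodule.span ℝ (plusOp G) := by
  have hle : Submodule.span ℝ G ≤
      (Submodule.span ℝ (plusOp G)).comap (LinearMap.mulLeft ℝ (X i)) :=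
    Submodule.span_le.2 fun g hg =>
      Submodule.subset_span (Or.inr (Set.mem_iUnion.2 ⟨i, g, hg, rfl⟩))
  exact hle hp

lemma plusOp_subset_ideal {I : Ideal (MP n)} (hG : G ⊆ I) : plusOp G ⊆ I := by
  refine Set.union_subset hG (Set.iUnion_subset fun i => ?_)
  rintro _ ⟨g, hg, rfl⟩
  exact I.mul_mem_left _ (hG hg)

lemma Hset_subset_ideal {I : Ideal (MP n)} (hI : ∀ j, h j ∈ I) : Hset h t ⊆ I := by
  rintro _ ⟨α, j, -, rfl⟩
  exact I.mul_mem_left _ (hI j)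

lemma Wset_subset_ideal {I : Ideal (MP n)} (hI : momKer L (t / 2) ⊆ I) : Wset h t L ⊆ I := by
  rintro _ ⟨α, g, -, hg, rfl⟩
  exact I.mul_mem_left _ (hI hg)

lemma generator_mem_momKerSubmodule (hL : ∀ g ∈ Hset h t, L g = 0) (hst : s ≤ t / 2) (j : Fin m)
    (hj : (h j).totalDegree ≤ s) : h j ∈ momKerSubmodule L s := by
  rw [← SetLike.mem_coe, coe_momKerSubmodule]
  exact ⟨hj, fun β hβ => hL _ ⟨β, j, by omega, mul_comm _ _⟩⟩

lemma Generic.apply_eq_zero (hL : Generic h t L) {g : MP n}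
    (hg : g ∈ Submodule.span ℝ (Hset h t ∪ Wset h t L)) : L g = 0 := by
  have hle : Submodule.span ℝ (Hset h t ∪ Wset h t L) ≤ LinearMap.ker L := by
    refine Submodule.span_le.2 (Set.union_subset hL.1.1 ?_)
    rintro _ ⟨α, p, hα, hp, rfl⟩
    rw [SetLike.mem_coe, LinearMap.mem_ker, mul_comm, hp.2 α hα]
  exact hle hg

lemma RxT_le_sup_of_isFlat {S : Submodule ℝ (MP n)}
    (hflat : IsFlat L s) (hS : momKerSubmodule L s * RxT n s ≤ S) :
    RxT n (2 * s) ≤ S ⊔ RxT n (s - 1) := by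
  suffices hle : ∀ k ≤ s, RxT n (s + k) ≤ S ⊔ RxT n (s - 1) by
    rw [two_mul]
    exact hle s le_rfl
  intro k hk
  induction k with
  | zero =>
    refine hflat.trans (sup_le_sup_right (fun p hp => hS ?_) _)
    rw [← mul_one p]
    exact Submodule.mul_mem_mul hp (one_mem_restrictTotalDegree s)
  | succ k ih =>
    have hdeg : RxT n (s - 1) * RxT n (k + 1) ≤ RxT n (s + k) :=
      Submodule.mul_le.2 fun p hp q hq =>
        restrictTotalDegree_mono (by omega) (mul_mem_restrictTotalDegree hp hq)
    calc RxT n (s + (k + 1)) ≤ RxT n s * RxT n (k + 1) := restrictTotalDegree_add_le_mul _ _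
      _ ≤ (momKerSubmodule L s ⊔ RxT n (s - 1)) * RxT n (k + 1) := mul_le_mul_left hflat _
      _ = momKerSubmodule L s * RxT n (k + 1) ⊔ RxT n (s - 1) * RxT n (k + 1) :=
        Submodule.sup_mul _ _ _
      _ ≤ S ⊔ RxT n (s - 1) :=
        sup_le (((mul_le_mul_right (restrictTotalDegree_mono hk) _).trans hS).trans
          le_sup_left) (hdeg.trans (ih (by omega)))

lemma isFlat_of_RxT_le_sup (hL : ∀ g ∈ Submodule.span ℝ G, L g = 0)
    (hspan : RxT n (2 * s) ≤ Submodule.span ℝ G ⊔ RxT n (s - 1))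
    (hplus : Submodule.span ℝ (plusOp G) ⊓ RxT n (2 * s) ≤ Submodule.span ℝ G) :
    IsFlat L s := by
  intro p hp
  obtain ⟨g, hg, q, hq, rfl⟩ :=
    Submodule.mem_sup.1 (hspan (restrictTotalDegree_mono (by omega) hp))
  refine Submodule.add_mem_sup (mem_momKerSubmodule.2 ?_) hq
  have hgs : g ∈ RxT n s := by
    simpa only [add_sub_cancel_right] using
      sub_mem hp (restrictTotalDegree_mono (Nat.sub_le s 1) hq)
  have hmul : RxT n s ≤ (Submodule.span ℝ G).comap (LinearMap.mulLeft ℝ g) := by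
    refine restrictTotalDegree_le_of_X_mul_mem ?_ fun i j hj f hf hfG => ?_
    · rwa [Submodule.mem_comap, LinearMap.mulLeft_apply, mul_one]
    · rw [Submodule.mem_comap, LinearMap.mulLeft_apply, mul_left_comm]
      exact hplus ⟨X_mul_mem_span_plusOp i hfG, restrictTotalDegree_mono (by omega)
        (X_mul_mem_restrictTotalDegree i (mul_mem_restrictTotalDegree hgs hf))⟩
  exact ⟨hgs, fun f hf => hL _ (hmul hf)⟩

lemma Generic.span_plusOp_inf_le (hL : Generic h t L) (hD : ∀ j, (h j).totalDegree ≤ s)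
    (hst : s ≤ t / 2) (hflat : IsFlat L s) :
    Submodule.span ℝ (plusOp (Hset h t ∪ Wset h t L)) ⊓ RxT n s ≤ momKerSubmodule L s := by
  obtain ⟨L', hagree, hpsd, hker⟩ := exists_flat_extension (hL.1.2.mono hst) hflat
  have hH : Hset h t ⊆ momIdeal L' := Hset_subset_ideal fun j =>
    hker (generator_mem_momKerSubmodule hL.1.1 hst j (hD j))
  have hL' : L' ∈ Kpos h t := ⟨fun g hg => apply_eq_zero_of_mem_momIdeal (hH hg), hpsd _⟩
  have hW : Wset h t L ⊆ momIdeal L' := Wset_subset_ideal <| by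
    rw [← coe_momKerSubmodule]
    exact (hL.momKerSubmodule_le hL').trans (momKerSubmodule_le_momIdeal hpsd)
  have hspan : Submodule.span ℝ (plusOp (Hset h t ∪ Wset h t L)) ≤
      (momIdeal L').restrictScalars ℝ :=
    Submodule.span_le.2 (plusOp_subset_ideal (Set.union_subset hH hW))
  rintro p ⟨hp, hps⟩
  refine mem_momKerSubmodule.2 ⟨hps, fun q hq => ?_⟩
  rw [← hagree _ (two_mul s ▸ mul_mem_restrictTotalDegree hps hq), mul_comm]
  exact hspan hp q

lemma Generic.dimProj_le_dimProj_plusOp (hL : Generic h t L) (hD : ∀ j, (h j).totalDegree ≤ s)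
    (hst : s ≤ t / 2) (hflat : IsFlat L s) :
    dimProj (2 * s) (Hset h t ∪ Wset h t L) ≤
      dimProj (s - 1) (plusOp (Hset h t ∪ Wset h t L)) := by
  have hW : Submodule.span ℝ (Wset h t L) ≤ Submodule.span ℝ (Hset h t ∪ Wset h t L) :=
    Submodule.span_mono Set.subset_union_right
  have hplus : Submodule.span ℝ (plusOp (Hset h t ∪ Wset h t L)) ⊓ RxT n (s - 1) ≤
      momKerSubmodule L (s - 1) := by
    rw [(hL.1.2.mono hst).momKerSubmodule_eq_inf (Nat.sub_le s 1)]
    have hdeg : RxT n (s - 1) ≤ RxT n s := restrictTotalDegree_mono (Nat.sub_le s 1)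
    exact le_inf ((inf_le_inf_left _ hdeg).trans (hL.span_plusOp_inf_le hD hst hflat)) inf_le_right
  calc dimProj (2 * s) (Hset h t ∪ Wset h t L)
      = dimProj (s - 1) (Hset h t ∪ Wset h t L) :=
        (dimProj_eq_iff_of_le (by omega)).2 <|
          RxT_le_sup_of_isFlat hflat ((hL.1.2.momKerSubmodule_mul_le_span_Wset hst).trans hW)
    _ ≤ momRank L (s - 1) :=
        dimProj_le_momRank ((hL.1.2.momKerSubmodule_le_span_Wset (by omega)).trans hW)
    _ ≤ dimProj (s - 1) (plusOp (Hset h t ∪ Wset h t L)) := momRank_le_dimProj hplus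

lemma Generic.isFlat_of_dimProj_eq (hL : Generic h t L)
    (hdim : dimProj (2 * s) (Hset h t ∪ Wset h t L) = dimProj (s - 1) (Hset h t ∪ Wset h t L))
    (hplus : dimProj (2 * s) (Hset h t ∪ Wset h t L) =
      dimProj (2 * s) (plusOp (Hset h t ∪ Wset h t L))) :
    IsFlat L s :=
  isFlat_of_RxT_le_sup (fun _ => hL.apply_eq_zero) ((dimProj_eq_iff_of_le (by omega)).1 hdim)
    (span_inf_RxT_le_of_dimProj_eq Set.subset_union_left hplus)

end DimensionConditions

/-- Let `D ≤ s ≤ ⌊t/2⌋`, `L*` generic in `K_{t,⪰}`, `G_t = H_t ∪ W_t`.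
Then `rank M_s(L*) = rank M_{s−1}(L*)` holds iff both `dim π_{2s}(G_t^⊥) = dim π_{s−1}(G_t^⊥)`
and `dim π_{2s}(G_t^⊥) = dim π_{2s}((G_t⁺)^⊥)` hold; and these conditions imply
`dim π_s(G_t^⊥) = dim π_{s−1}(G_t^⊥)` and `dim π_s(G_t^⊥) = dim π_s((G_t⁺)^⊥)`. -/
theorem rank_iff_dim_conditions {n m s t : ℕ} (h : Fin m → MP n)
    (hD : ∀ j, (h j).totalDegree ≤ s) (hst : s ≤ t / 2)
    (Lstar : Module.Dual ℝ (MP n)) (hgen : Generic h t Lstar) :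
    (momRank Lstar s = momRank Lstar (s - 1) ↔
      (dimProj (2 * s) (Hset h t ∪ Wset h t Lstar) =
          dimProj (s - 1) (Hset h t ∪ Wset h t Lstar) ∧
        dimProj (2 * s) (Hset h t ∪ Wset h t Lstar) =
          dimProj (2 * s) (plusOp (Hset h t ∪ Wset h t Lstar)))) ∧
    ((dimProj (2 * s) (Hset h t ∪ Wset h t Lstar) =
          dimProj (s - 1) (Hset h t ∪ Wset h t Lstar) ∧
        dimProj (2 * s) (Hset h t ∪ Wset h t Lstar) =
          dimProj (2 * s) (plusOp (Hset h t ∪ Wset h t Lstar))) →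
      (dimProj s (Hset h t ∪ Wset h t Lstar) =
          dimProj (s - 1) (Hset h t ∪ Wset h t Lstar) ∧
        dimProj s (Hset h t ∪ Wset h t Lstar) =
          dimProj s (plusOp (Hset h t ∪ Wset h t Lstar)))) := by
  have hrank := (hgen.1.2.mono hst).momRank_eq_momRank_sub_one_iff
  have hdim (hflat : IsFlat Lstar s) {d : ℕ} (hd : s - 1 ≤ d) (hd' : d ≤ 2 * s) :=
    dimProj_eq_and_eq_of_le Set.subset_union_left hd hd'
      (hgen.dimProj_le_dimProj_plusOp hD hst hflat)
  refine ⟨⟨fun hrk => ?_, fun ⟨hspan, hplus⟩ => hrank.2 (hgen.isFlat_of_dimProj_eq hspan hplus)⟩,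
    fun ⟨hspan, hplus⟩ => ?_⟩
  · have hflat := hrank.1 hrk
    exact ⟨(hdim hflat le_rfl (by omega)).1.symm, (hdim hflat (by omega) le_rfl).2.symm⟩
  · have hflat := hgen.isFlat_of_dimProj_eq hspan hplus
    obtain ⟨hG, hGplus⟩ := hdim hflat (Nat.sub_le s 1) (by omega)
    exact ⟨hG.trans hspan, hG.trans hGplus.symm⟩
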